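/- Let a budget profile be given (integer m ≥ 1, strictly increasing positive real privacy budgets ε_1 < ε_2 < ⋯ < ε_m, positive integer counts n_1, …, n_m, n = n_1 + ⋯ + n_m, Z = (n − n_m)(n − n_m + 1/4)), let d ≥ 1 and α ≥ 1 be integers, and let e_nlf ≥ 0 be a real number. Then errO_{1/d}(1/2) + (1/(2α+1)) · ( Σ_{k=1}^{α+1} errO_1(k) + α · e_nlf ) ≤ min( 8/(d² ε_1²) , Z + 8/(d² ε_m²) ) + (1/(2α+1)) · ( min( (2/ε_1²)·H²_{α+1} , (α+1)·Z + (2/ε_m²)·H²_{α+1} ) + α · e_nlf ). (Arithmetic form of Theorem 3, case α ≤ w_L: the average per-time-slot error of Personalized Budget Absorption, composed of the dissimilarity-calculation error plus the average over 2α+1 slots of the skipped-publication errors, the publication error, and α nullified-publication errors each of average error e_nlf, is bounded by min(8/(d²ε_L²), Z + 8/(d²ε_R²)) + (1/(2α+1))(err̃^{(s,p)}_NOP + α·ērr_nlf) with ε_L = ε_1, ε_R = ε_m.) -/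

import Mathlib

open Finset

/-- Sampling probability p_k(θ) = (e^{ε_k} − 1)/(e^{θ} − 1). -/
noncomputable def samplingP {m : ℕ} (ε : Fin m → ℝ) (k : Fin m) (θ : ℝ) : ℝ :=
  (Real.exp (ε k) - 1) / (Real.exp θ - 1)

/-- Sampling error err_s(θ). -/
noncomputable def errS {m : ℕ} (ε : Fin m → ℝ) (nn : Fin m → ℕ) (θ : ℝ) : ℝ :=
  (∑ k, if ε k < θ then (nn k : ℝ) * samplingP ε k θ * (1 - samplingP ε k θ) else 0)
    + (∑ k, if ε k < θ then (nn k : ℝ) * (1 - samplingP ε k θ) else 0) ^ 2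

/-- Noise error err_dp(θ) = 2I²/θ². -/
noncomputable def errDP (I θ : ℝ) : ℝ := 2 * I ^ 2 / θ ^ 2

/-- Total error err(θ) = err_s(θ) + err_dp(θ). -/
noncomputable def errTot {m : ℕ} (ε : Fin m → ℝ) (nn : Fin m → ℕ) (I θ : ℝ) : ℝ :=
  errS ε nn θ + errDP I θ

/-- OBS error: errO_I = min_{1 ≤ j ≤ m} err(ε_j). -/
noncomputable def errO {m : ℕ} (hm : 0 < m) (ε : Fin m → ℝ) (nn : Fin m → ℕ) (I : ℝ) : ℝ :=
  Finset.univ.inf' (Finset.univ_nonempty_iff.mpr (Fin.pos_iff_nonempty.mp hm))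
    (fun j => errTot ε nn I (ε j))

/-- Index of the smallest budget ε_1. -/
def firstIdx {m : ℕ} (hm : 0 < m) : Fin m := ⟨0, hm⟩

/-- Index of the largest budget ε_m. -/
def lastIdx {m : ℕ} (hm : 0 < m) : Fin m := ⟨m - 1, Nat.sub_lt hm Nat.one_pos⟩

/-- Z = (n − n_m)(n − n_m + 1/4). -/
noncomputable def Zval {m : ℕ} (hm : 0 < m) (nn : Fin m → ℕ) : ℝ :=
  ((∑ j, (nn j : ℝ)) - nn (lastIdx hm)) * ((∑ j, (nn j : ℝ)) - nn (lastIdx hm) + 1 / 4)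

/-- N-th square harmonic number H²_N = Σ_{k=1}^N 1/k². -/
noncomputable def sqHarmonic (N : ℕ) : ℝ := ∑ k ∈ Finset.Icc 1 N, 1 / (k : ℝ) ^ 2

/-!
The OBS error is a minimum over thresholds, so it is at most its value at `ε_1` and its value at
`ε_m`. At `ε_1` every user qualifies without sampling and only noise remains. At a threshold `θ`
with `N` users below it, each of them contributes a Bernoulli variance `p (1 - p) ≤ 1 / 4` and a
bias `1 - p ∈ [0, 1]`, so the sampling error is at most `N / 4 + N ^ 2`; at `ε_m` this is at most
`Z`. Scaling the budgets by `β` leaves `Z` alone and divides the noise error by `β ^ 2`, which turns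
the sum over the scales `k ≤ α + 1` into a square harmonic number.
-/

section OBSError

variable {m : ℕ} {ε : Fin m → ℝ} {k : Fin m} {θ : ℝ}

/-- The number of users whose budget lies strictly below the threshold `θ`, i.e. the users that
sampling at `θ` may drop; real-valued, as it enters the error bounds. -/
noncomputable def countBelow (ε : Fin m → ℝ) (nn : Fin m → ℕ) (θ : ℝ) : ℝ :=
  ∑ k with ε k < θ, (nn k : ℝ)

lemma countBelow_nonneg (ε : Fin m → ℝ) (nn : Fin m → ℕ) (θ : ℝ) : 0 ≤ countBelow ε nn θ :=
  sum_nonneg fun _ _ => Nat.cast_nonneg _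

lemma countBelow_apply_le (ε : Fin m → ℝ) (nn : Fin m → ℕ) (j : Fin m) :
    countBelow ε nn (ε j) ≤ (∑ k, (nn k : ℝ)) - nn j := by
  rw [← sum_erase_eq_sub (mem_univ j)]
  refine sum_le_sum_of_subset_of_nonneg (fun k hk => ?_) fun _ _ _ => Nat.cast_nonneg _
  exact mem_erase.mpr ⟨ne_of_apply_ne ε (mem_filter.mp hk).2.ne, mem_univ k⟩

lemma samplingP_nonneg (hk : 0 ≤ ε k) (hθ : 0 ≤ θ) : 0 ≤ samplingP ε k θ :=
  div_nonneg (sub_nonneg.mpr (Real.one_le_exp hk)) (sub_nonneg.mpr (Real.one_le_exp hθ))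

lemma samplingP_le_one (hθ : 0 ≤ θ) (hk : ε k ≤ θ) : samplingP ε k θ ≤ 1 :=
  div_le_one_of_le₀ (sub_le_sub_right (Real.exp_le_exp.mpr hk) 1)
    (sub_nonneg.mpr (Real.one_le_exp hθ))

lemma sum_sampling_variance_le (ε : Fin m → ℝ) (nn : Fin m → ℕ) (θ : ℝ) :
    ∑ k with ε k < θ, (nn k : ℝ) * samplingP ε k θ * (1 - samplingP ε k θ) ≤
      countBelow ε nn θ * (1 / 4) := by
  rw [countBelow, sum_mul]
  refine sum_le_sum fun k _ => ?_
  rw [mul_assoc]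
  gcongr
  linarith [sq_nonneg (samplingP ε k θ - 1 / 2)]

lemma sum_sampling_bias_nonneg (hε : ∀ k, 0 ≤ ε k) (nn : Fin m → ℕ) (θ : ℝ) :
    0 ≤ ∑ k with ε k < θ, (nn k : ℝ) * (1 - samplingP ε k θ) := by
  refine sum_nonneg fun k hk => mul_nonneg (Nat.cast_nonneg _) (sub_nonneg.mpr ?_)
  have hkθ : ε k < θ := (mem_filter.mp hk).2
  exact samplingP_le_one ((hε k).trans hkθ.le) hkθ.le

lemma sum_sampling_bias_le (hε : ∀ k, 0 ≤ ε k) (nn : Fin m → ℕ) (θ : ℝ) :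
    ∑ k with ε k < θ, (nn k : ℝ) * (1 - samplingP ε k θ) ≤ countBelow ε nn θ := by
  refine sum_le_sum fun k hk => mul_le_of_le_one_right (Nat.cast_nonneg _) (sub_le_self _ ?_)
  exact samplingP_nonneg (hε k) ((hε k).trans (mem_filter.mp hk).2.le)

lemma errS_le_countBelow (hε : ∀ k, 0 ≤ ε k) (nn : Fin m → ℕ) (θ : ℝ) :
    errS ε nn θ ≤ countBelow ε nn θ * (countBelow ε nn θ + 1 / 4) := by
  simp only [errS, ← sum_filter]
  calc
    _ ≤ countBelow ε nn θ * (1 / 4) + countBelow ε nn θ ^ 2 :=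
      add_le_add (sum_sampling_variance_le ε nn θ)
        (pow_le_pow_left₀ (sum_sampling_bias_nonneg hε nn θ) (sum_sampling_bias_le hε nn θ) 2)
    _ = _ := by ring

lemma errS_lastIdx_le_Zval (hm : 0 < m) (hε : ∀ k, 0 ≤ ε k) (nn : Fin m → ℕ) :
    errS ε nn (ε (lastIdx hm)) ≤ Zval hm nn := by
  have hcount := countBelow_apply_le ε nn (lastIdx hm)
  have hnonneg := countBelow_nonneg ε nn (ε (lastIdx hm))
  refine (errS_le_countBelow hε nn _).trans ?_
  unfold Zval
  gcongr
  exact hnonneg.trans hcount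

lemma errS_eq_zero_of_forall_le (hθ : ∀ k, θ ≤ ε k) (nn : Fin m → ℕ) : errS ε nn θ = 0 := by
  simp [errS, (hθ _).not_gt]

lemma errO_le_errTot (hm : 0 < m) (ε : Fin m → ℝ) (nn : Fin m → ℕ) (I : ℝ) (j : Fin m) :
    errO hm ε nn I ≤ errTot ε nn I (ε j) :=
  inf'_le _ (mem_univ j)

lemma errO_le_errDP_firstIdx (hm : 0 < m) (hmono : Monotone ε) (nn : Fin m → ℕ) (I : ℝ) :
    errO hm ε nn I ≤ errDP I (ε (firstIdx hm)) := by
  have hfirst : ∀ k, ε (firstIdx hm) ≤ ε k := fun k =>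
    hmono (Fin.mk_le_of_le_val (Nat.zero_le k))
  simpa only [errTot, errS_eq_zero_of_forall_le hfirst, zero_add] using
    errO_le_errTot hm ε nn I (firstIdx hm)

lemma errO_le_Zval_add_errDP_lastIdx (hm : 0 < m) (hε : ∀ k, 0 ≤ ε k) (nn : Fin m → ℕ)
    (I : ℝ) : errO hm ε nn I ≤ Zval hm nn + errDP I (ε (lastIdx hm)) :=
  (errO_le_errTot hm ε nn I (lastIdx hm)).trans
    (add_le_add_left (errS_lastIdx_le_Zval hm hε nn) _)

lemma errDP_mul (I β θ : ℝ) : errDP I (β * θ) = errDP I θ * (1 / β ^ 2) := by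
  rw [errDP, errDP, mul_pow, mul_comm (β ^ 2), div_mul_div_comm, mul_one]

lemma sum_errDP_mul (I θ : ℝ) (N : ℕ) :
    ∑ k ∈ Icc 1 N, errDP I ((k : ℝ) * θ) = errDP I θ * sqHarmonic N := by
  simp only [errDP_mul, sqHarmonic, mul_sum]

lemma errO_mul_le_min (hm : 0 < m) (hε : ∀ k, 0 ≤ ε k) (hmono : Monotone ε) (nn : Fin m → ℕ)
    (I : ℝ) {β : ℝ} (hβ : 0 ≤ β) :
    errO hm (fun j => β * ε j) nn I ≤
      min (errDP I (β * ε (firstIdx hm))) (Zval hm nn + errDP I (β * ε (lastIdx hm))) :=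
  le_min (errO_le_errDP_firstIdx hm (hmono.const_mul hβ) nn I)
    (errO_le_Zval_add_errDP_lastIdx hm (fun k => mul_nonneg hβ (hε k)) nn I)

lemma sum_errO_mul_le_min (hm : 0 < m) (hε : ∀ k, 0 ≤ ε k) (hmono : Monotone ε)
    (nn : Fin m → ℕ) (I : ℝ) (N : ℕ) :
    ∑ k ∈ Icc 1 N, errO hm (fun j => (k : ℝ) * ε j) nn I ≤
      min (errDP I (ε (firstIdx hm)) * sqHarmonic N)
        (N * Zval hm nn + errDP I (ε (lastIdx hm)) * sqHarmonic N) := by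
  have hscale (k : ℕ) := errO_mul_le_min hm hε hmono nn I k.cast_nonneg
  rw [← sum_errDP_mul, ← sum_errDP_mul]
  refine le_min (sum_le_sum fun k _ => (hscale k).trans (min_le_left _ _)) ?_
  calc
    _ ≤ ∑ k ∈ Icc 1 N, (Zval hm nn + errDP I ((k : ℝ) * ε (lastIdx hm))) :=
      sum_le_sum fun k _ => (hscale k).trans (min_le_right _ _)
    _ = _ := by simp [sum_add_distrib]

end OBSError

/-- Arithmetic form of Theorem 3, case α ≤ w_L: the average per-time-slot error of
Personalized Budget Absorption is bounded as stated. -/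
theorem pba_average_error_bound (m : ℕ) (hm : 0 < m) (ε : Fin m → ℝ) (nn : Fin m → ℕ)
    (hpos : ∀ j, 0 < ε j) (hmono : StrictMono ε) (hcount : ∀ j, 0 < nn j)
    (d : ℕ) (hd : 1 ≤ d) (α : ℕ) (hα : 1 ≤ α) (enlf : ℝ) (henlf : 0 ≤ enlf) :
    errO hm (fun j => (1 / 2 : ℝ) * ε j) nn (1 / (d : ℝ))
      + (1 / (2 * (α : ℝ) + 1)) *
          ((∑ k ∈ Finset.Icc 1 (α + 1), errO hm (fun j => (k : ℝ) * ε j) nn 1)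
            + (α : ℝ) * enlf) ≤
      min (8 / ((d : ℝ) ^ 2 * (ε (firstIdx hm)) ^ 2))
          (Zval hm nn + 8 / ((d : ℝ) ^ 2 * (ε (lastIdx hm)) ^ 2))
        + (1 / (2 * (α : ℝ) + 1)) *
            (min ((2 / (ε (firstIdx hm)) ^ 2) * sqHarmonic (α + 1))
                (((α : ℝ) + 1) * Zval hm nn + (2 / (ε (lastIdx hm)) ^ 2) * sqHarmonic (α + 1))
              + (α : ℝ) * enlf) := by
  have hε : ∀ j, 0 ≤ ε j := fun j => (hpos j).le
  have hnoise (x : ℝ) : errDP (1 / (d : ℝ)) (1 / 2 * x) = 8 / ((d : ℝ) ^ 2 * x ^ 2) := by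
    rw [errDP_mul, errDP]
    ring
  have hdissimilarity := errO_mul_le_min hm hε hmono.monotone nn (1 / (d : ℝ)) one_half_pos.le
  have hpublication := sum_errO_mul_le_min hm hε hmono.monotone nn 1 (α + 1)
  rw [hnoise, hnoise] at hdissimilarity
  simp only [errDP, one_pow, mul_one, Nat.cast_add_one] at hpublication
  gcongr
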